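/- Let C ∈ 𝐂 and define G ∈ 𝐂 by letting G[f] be the subgroup of 2^ω of which C[f] is a coset, for each f ∈ 2^ω. Let α be an ordinal. If rnk^C(∅) ≥ α, then (𝔐, C) ≡_α (𝔐, G), where (𝔐, C) denotes the expansion of 𝔐 by a unary predicate interpreted as C. Moreover, if rnk^C(∅) < ∞, then (𝔐, C) ≢_∞ (𝔐, G). -/

import Mathlib

open FirstOrder

universe u v w

namespace ScottTools

variable (L : FirstOrder.Language.{u, v}) (M : Type w) (N : Type w) [L.Structure M] [L.Structure N]

/-- Two tuples (of the same length) have the same quantifier-free type. -/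
def QFEquiv {n : ℕ} (a : Fin n → M) (b : Fin n → N) : Prop :=
  ∀ φ : L.Formula (Fin n), φ.IsQF → (φ.Realize a ↔ φ.Realize b)

/-- The ordinal-indexed back-and-forth equivalence `(M, ā) ≡_α (N, b̄)`:
`≡₀` is equality of quantifier-free types, `≡_{α+1}` is the back-and-forth condition
with respect to `≡_α`, and limit stages are intersections. -/
def BFEquiv : Ordinal.{w} → (n : ℕ) → (Fin n → M) → (Fin n → N) → Prop
  | α, n, a, b =>
    QFEquiv L M N a b ∧
    ∀ β : Ordinal.{w}, β < α →
      (∀ x : M, ∃ y : N, BFEquiv β (n + 1) (Fin.snoc a x) (Fin.snoc b y)) ∧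
      (∀ y : N, ∃ x : M, BFEquiv β (n + 1) (Fin.snoc a x) (Fin.snoc b y))
  termination_by α => α

/-- `(M, ā) ≡_∞ (N, b̄)`: back-and-forth equivalent for all ordinals. -/
def BFEquivInf (n : ℕ) (a : Fin n → M) (b : Fin n → N) : Prop :=
  ∀ α : Ordinal.{w}, BFEquiv L M N α n a b

/-- The Scott rank of a structure: the least ordinal `α` such that any two finite tuples
that are `≡_α`-equivalent are `≡_∞`-equivalent. -/
noncomputable def ScottRank : Ordinal.{w} :=
  sInf {α : Ordinal.{w} | ∀ (n : ℕ) (a b : Fin n → M),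
    BFEquiv L M M α n a b → BFEquivInf L M M n a b}

/-- `B` is a base for `M`: distinct elements of `M` have distinct complete first-order
types over `B`. -/
def IsBase (B : Set M) : Prop :=
  ∀ a b : M,
    (∀ (k : ℕ) (p : Fin k → M), (∀ i, p i ∈ B) →
      ∀ φ : L.Formula (Fin (k + 1)),
        (φ.Realize (Fin.snoc p a) ↔ φ.Realize (Fin.snoc p b))) →
    a = b

end ScottTools

namespace G2sys

/-- The Cantor group `2^ω` with coordinatewise addition mod 2. -/
abbrev G2 : Type := ℕ → ZMod 2

/-- `C ∈ 𝐂`: every vertical fiber `C[f]` is a coset of a subgroup of `2^ω`. -/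
def InC (C : Set (G2 × G2)) : Prop :=
  ∀ f : G2, ∃ (H : AddSubgroup G2) (g₀ : G2),
    {g : G2 | (f, g) ∈ C} = (fun h => g₀ + h) '' (H : Set G2)

/-- `A ⊆ 2^ω × 2^ω` is coherent if whenever two of its members agree on the first
coordinate up to `n`, they also agree on the second coordinate up to `n`. -/
def Coherent (A : Set (G2 × G2)) : Prop :=
  ∀ p ∈ A, ∀ q ∈ A, ∀ n : ℕ, (∀ m < n, p.1 m = q.1 m) → ∀ m < n, p.2 m = q.2 m

/-- `rnkGE C α A`: the rank of the coherent set `A ⊆ C` is at least `α`. -/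
def rnkGE (C : Set (G2 × G2)) : Ordinal.{0} → Set (G2 × G2) → Prop
  | α, A => ∀ β : Ordinal.{0}, β < α → ∀ f : G2, ∃ g : G2,
      insert (f, g) A ⊆ C ∧ Coherent (insert (f, g) A) ∧ rnkGE C β (insert (f, g) A)
  termination_by α => α

end G2sys

open G2sys ScottTools

namespace G2sys

/-- The language of `𝔐`: binary relations `E_{p_n}` (left) and `E_{q_n}` (right),
together with one extra unary predicate. -/
def L316 : FirstOrder.Language :=
  ⟨fun _ => Empty, fun k => PLift (k = 1) × Unit ⊕ PLift (k = 2) × (ℕ ⊕ ℕ)⟩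

/-- The structure `(𝔐, X)`: universe `2^ω × 2^ω`, relations
`(f,g) E_{p_n} (f',g')` iff `f n = f' n`, `(f,g) E_{q_n} (f',g')` iff `f↾(n+1) = f'↾(n+1)`
and `g n = g' n`, and the unary predicate interpreted by `X`. -/
def MStruct (X : Set (G2 × G2)) : L316.Structure (G2 × G2) where
  funMap := fun f _ => f.elim
  RelMap := fun {k} r x =>
    match r with
    | Sum.inl ⟨h, _⟩ => x (Fin.cast h.down.symm 0) ∈ X
    | Sum.inr ⟨h, Sum.inl n⟩ =>
        (x (Fin.cast h.down.symm 0)).1 n = (x (Fin.cast h.down.symm 1)).1 n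
    | Sum.inr ⟨h, Sum.inr n⟩ =>
        (∀ m ≤ n, (x (Fin.cast h.down.symm 0)).1 m = (x (Fin.cast h.down.symm 1)).1 m) ∧
        (x (Fin.cast h.down.symm 0)).2 n = (x (Fin.cast h.down.symm 1)).2 n

end G2sys

/-!
If `A ⊆ C` is coherent, then subtracting `h` from `g` for `(f, h) ∈ A` carries `C[f]` onto `G[f]`,
and coherence makes these translations of fibers compatible with all the relations `E_{q_n}`. Hence
a coherent set of rank at least `α` yields a winning strategy for the back-and-forth game of
length `α`.

Conversely, coherence and the rank of the range of a nonempty tuple are invariants of `≡_α`,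
because the relations `E_{p_n}` determine the differences of first coordinates: in a group with two
elements, `x - y` is known once it is known whether `x = y`. The zero section is coherent and
contained in `G`, so sets of zeros have rank `∞` with respect to `G`, and this rank is inherited
by `C`.
-/

namespace ScottTools

section

open FirstOrder.Language

variable {L : FirstOrder.Language.{u, v}} {M N : Type w} {_ : L.Structure M} {_ : L.Structure N}
  {n : ℕ} {a : Fin n → M} {b : Fin n → N}

theorem bfEquiv_iff {α : Ordinal.{w}} :
    BFEquiv L M N α n a b ↔ QFEquiv L M N a b ∧ ∀ β < α,
      (∀ x, ∃ y, BFEquiv L M N β (n + 1) (Fin.snoc a x) (Fin.snoc b y)) ∧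
      (∀ y, ∃ x, BFEquiv L M N β (n + 1) (Fin.snoc a x) (Fin.snoc b y)) := by
  rw [BFEquiv]

theorem bfEquiv_of_system
    (S : Ordinal.{w} → ∀ {n : ℕ}, (Fin n → M) → (Fin n → N) → Prop)
    (qf : ∀ {α} {n : ℕ} {a : Fin n → M} {b : Fin n → N}, S α a b → QFEquiv L M N a b)
    (forth : ∀ {α β} {n : ℕ} {a : Fin n → M} {b : Fin n → N}, S α a b → β < α →
      ∀ x, ∃ y, S β (Fin.snoc a x : Fin (n + 1) → M) (Fin.snoc b y : Fin (n + 1) → N))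
    (back : ∀ {α β} {n : ℕ} {a : Fin n → M} {b : Fin n → N}, S α a b → β < α →
      ∀ y, ∃ x, S β (Fin.snoc a x : Fin (n + 1) → M) (Fin.snoc b y : Fin (n + 1) → N))
    {α : Ordinal.{w}} (h : S α a b) : BFEquiv L M N α n a b := by
  induction α using WellFoundedLT.induction generalizing n a b with
  | ind α ih =>
    exact bfEquiv_iff.2 ⟨qf h, fun β hβ =>
      ⟨fun x => (forth h hβ x).imp fun _ => ih β hβ, fun y => (back h hβ y).imp fun _ => ih β hβ⟩⟩

theorem exists_eq_var_of_isRelational [L.IsRelational] {ι : Type*} (t : L.Term ι) :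
    ∃ i, t = .var i := by
  cases t with
  | var i => exact ⟨i, rfl⟩
  | func f _ => exact isEmptyElim f

theorem qfEquiv_iff_of_isRelational [L.IsRelational] :
    QFEquiv L M N a b ↔ (∀ i j, a i = a j ↔ b i = b j) ∧
      ∀ {k : ℕ} (R : L.Relations k) (s : Fin k → Fin n),
        Structure.RelMap R (a ∘ s) ↔ Structure.RelMap R (b ∘ s) := by
  constructor
  · exact fun h =>
      ⟨fun i j => h (.equal (.var (.inl i)) (.var (.inl j))) (.of_isAtomic (.equal _ _)),
        fun R s => h (.rel R fun l => .var (.inl (s l))) (.of_isAtomic (.rel _ _))⟩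
  · rintro ⟨eq_iff, rel_iff⟩ φ hφ
    have exists_var (t : L.Term (Fin n ⊕ Fin 0)) : ∃ i, t = .var (.inl i) := by
      obtain ⟨i | i, rfl⟩ := exists_eq_var_of_isRelational t
      · exact ⟨i, rfl⟩
      · exact i.elim0
    unfold Formula.Realize
    generalize (default : Fin 0 → M) = d, (default : Fin 0 → N) = e
    induction hφ with
    | falsum => rfl
    | imp _ _ ih₁ ih₂ => exact imp_congr ih₁ ih₂
    | of_isAtomic hφ =>
      cases hφ with
      | equal t₁ t₂ =>
        obtain ⟨i, rfl⟩ := exists_var t₁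
        obtain ⟨j, rfl⟩ := exists_var t₂
        exact eq_iff i j
      | rel R ts =>
        choose s hs using fun l => exists_var (ts l)
        obtain rfl : ts = fun l => .var (.inl (s l)) := funext hs
        exact rel_iff R s

end

end ScottTools

namespace G2sys

/-- `(𝔐, X, a)` and `(𝔐, Y, b)` have the same quantifier-free type. Both structures live on
the type `G2 × G2`, so the structure instances are passed explicitly. -/
abbrev MQFEquiv (X Y : Set (G2 × G2)) {n : ℕ} (a b : Fin n → G2 × G2) : Prop :=
  @QFEquiv L316 _ _ (MStruct X) (MStruct Y) n a b

/-- `(𝔐, X, a) ≡_α (𝔐, Y, b)`, with explicit structure instances as in `MQFEquiv`. -/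
abbrev MBFEquiv (X Y : Set (G2 × G2)) (α : Ordinal.{0}) {n : ℕ} (a b : Fin n → G2 × G2) : Prop :=
  @BFEquiv L316 _ _ (MStruct X) (MStruct Y) α n a b

variable {X Y A B C G : Set (G2 × G2)} {α : Ordinal.{0}} {n : ℕ} {a b : Fin n → G2 × G2}

section QuantifierFree

instance : L316.IsRelational := fun _ => inferInstanceAs (IsEmpty Empty)

theorem eq_iff_forall_agree {p q : G2 × G2} :
    p = q ↔ (∀ m, p.1 m = q.1 m) ∧ ∀ m, (∀ k ≤ m, p.1 k = q.1 k) → p.2 m = q.2 m := by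
  rw [Prod.ext_iff, funext_iff, funext_iff]
  exact and_congr_right fun h => forall_congr' fun _ => (imp_iff_right fun k _ => h k).symm

theorem mQFEquiv_iff :
    MQFEquiv X Y a b ↔ (∀ i, a i ∈ X ↔ b i ∈ Y) ∧
      (∀ i j m, (a i).1 m = (a j).1 m ↔ (b i).1 m = (b j).1 m) ∧
      ∀ i j m, (∀ k ≤ m, (a i).1 k = (a j).1 k) →
        ((a i).2 m = (a j).2 m ↔ (b i).2 m = (b j).2 m) := by
  refine qfEquiv_iff_of_isRelational.trans ⟨?_, ?_⟩
  · rintro ⟨-, rel_iff⟩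
    have fst_iff i j m : (a i).1 m = (a j).1 m ↔ (b i).1 m = (b j).1 m :=
      rel_iff (k := 2) (Sum.inr ⟨⟨rfl⟩, Sum.inl m⟩) ![i, j]
    refine ⟨fun i => rel_iff (k := 1) (Sum.inl ⟨⟨rfl⟩, ()⟩) ![i], fst_iff, fun i j m h => ?_⟩
    have h' : ∀ k ≤ m, (b i).1 k = (b j).1 k := fun k hk => (fst_iff i j k).1 (h k hk)
    have snd_iff : (_ ∧ _) ↔ (_ ∧ _) := rel_iff (k := 2) (Sum.inr ⟨⟨rfl⟩, Sum.inr m⟩) ![i, j]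
    exact (and_iff_right h).symm.trans (snd_iff.trans (and_iff_right h'))
  · rintro ⟨mem_iff, fst_iff, snd_iff⟩
    refine ⟨fun i j => ?_, ?_⟩
    · simp only [eq_iff_forall_agree, ← fst_iff]
      exact and_congr_right fun _ => forall₂_congr fun m h => snd_iff i j m h
    · rintro k (⟨⟨rfl⟩, -⟩ | ⟨⟨rfl⟩, m | m⟩) s
      · exact mem_iff (s 0)
      · exact fst_iff (s 0) (s 1) m
      · have agree_iff := forall₂_congr fun k (_ : k ≤ m) => fst_iff (s 0) (s 1) k
        exact (and_congr_right (snd_iff (s 0) (s 1) m)).trans (and_congr_left' agree_iff)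

theorem fst_sub_fst_eq_of_mQFEquiv (h : MQFEquiv X Y a b) (i j : Fin n) :
    (a i).1 - (a j).1 = (b i).1 - (b j).1 := by
  have sub_eq_sub : ∀ x x' y y' : ZMod 2, (x = x' ↔ y = y') → x - x' = y - y' := by decide
  exact funext fun m => sub_eq_sub _ _ _ _ ((mQFEquiv_iff.1 h).2.1 i j m)

theorem range_subset_iff_of_mQFEquiv (h : MQFEquiv X Y a b) :
    Set.range a ⊆ X ↔ Set.range b ⊆ Y := by
  simp only [Set.range_subset_iff, (mQFEquiv_iff.1 h).1]

end QuantifierFree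

section Coherent

theorem coherent_iff :
    Coherent A ↔ ∀ p ∈ A, ∀ q ∈ A, ∀ m, (∀ k ≤ m, p.1 k = q.1 k) → p.2 m = q.2 m := by
  refine forall₄_congr fun p _ q _ => ⟨fun h m hm => ?_, fun h n hn m hmn => ?_⟩
  · exact h (m + 1) (fun k hk => hm k (Nat.lt_succ_iff.1 hk)) m m.lt_succ_self
  · exact h m fun k hk => hn k (hk.trans_lt hmn)

theorem coherent_mono (hB : Coherent B) (hAB : A ⊆ B) : Coherent A :=
  fun p hp q hq => hB p (hAB hp) q (hAB hq)

/-- The graph of the zero function `2^ω → 2^ω`, a coherent section of every `C ∈ 𝐂` whose fibers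
are subgroups. -/
def zeroSection : Set (G2 × G2) := {p | p.2 = 0}

theorem coherent_zeroSection : Coherent zeroSection := fun _ hp _ hq _ _ m _ =>
  congr_fun (hp.trans hq.symm) m

theorem coherent_range_iff_of_mQFEquiv (h : MQFEquiv X Y a b) :
    Coherent (Set.range a) ↔ Coherent (Set.range b) := by
  obtain ⟨-, fst_iff, snd_iff⟩ := mQFEquiv_iff.1 h
  simp only [coherent_iff, Set.forall_mem_range]
  refine forall₃_congr fun i j m => ?_
  simp only [← fst_iff]
  exact forall_congr' fun h => snd_iff i j m h

end Coherent

section Rank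

theorem rnkGE_iff :
    rnkGE C α A ↔ ∀ β < α, ∀ f, ∃ g,
      insert (f, g) A ⊆ C ∧ Coherent (insert (f, g) A) ∧ rnkGE C β (insert (f, g) A) := by
  rw [rnkGE]

theorem rnkGE_anti (hAB : A ⊆ B) (hB : rnkGE C α B) : rnkGE C α A := by
  induction α using WellFoundedLT.induction generalizing A B with
  | ind α ih =>
    rw [rnkGE_iff] at hB ⊢
    intro β hβ f
    obtain ⟨g, hC, hcoh, hrnk⟩ := hB β hβ f
    have hsub : insert (f, g) A ⊆ insert (f, g) B := Set.insert_subset_insert hAB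
    exact ⟨g, hsub.trans hC, coherent_mono hcoh hsub, ih β hβ hsub hrnk⟩

theorem rnkGE_of_subset_coherent_section (hC : B ⊆ C) (hB : Coherent B)
    (total : ∀ f, ∃ g, (f, g) ∈ B) (hAB : A ⊆ B) : rnkGE C α A := by
  induction α using WellFoundedLT.induction generalizing A with
  | ind α ih =>
    rw [rnkGE_iff]
    intro β hβ f
    obtain ⟨g, hg⟩ := total f
    have hsub : insert (f, g) A ⊆ B := Set.insert_subset hg hAB
    exact ⟨g, hsub.trans hC, coherent_mono hB hsub, ih β hβ hsub⟩

theorem rnkGE_range_of_mBFEquiv [NeZero n] (h : MBFEquiv X Y α a b)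
    (hb : rnkGE Y α (Set.range b)) : rnkGE X α (Set.range a) := by
  induction α using WellFoundedLT.induction generalizing n with
  | ind α ih =>
    rw [rnkGE_iff] at hb ⊢
    intro β hβ f
    -- An answer to this challenge has first coordinate `f`, as it differs from `(a 0).1` the way
    -- the challenge differs from `(b 0).1`.
    obtain ⟨g', hY, hcoh, hrnk⟩ := hb β hβ (f - (a 0).1 + (b 0).1)
    obtain ⟨⟨f', g⟩, hβequiv⟩ := ((bfEquiv_iff.1 h).2 β hβ).2 (f - (a 0).1 + (b 0).1, g')
    have hqf := (bfEquiv_iff.1 hβequiv).1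
    obtain rfl : f' = f := by
      simpa using fst_sub_fst_eq_of_mQFEquiv hqf (Fin.last n) (Fin.castSucc 0)
    rw [← Fin.range_snoc] at hY hcoh hrnk
    refine ⟨g, ?_⟩
    rw [← Fin.range_snoc]
    exact ⟨(range_subset_iff_of_mQFEquiv hqf).2 hY, (coherent_range_iff_of_mQFEquiv hqf).2 hcoh,
      ih β hβ hβequiv hrnk⟩

end Rank

section Direction

/-- Every fiber `G[f]` is a subgroup of `2^ω` of which `C[f]` is a coset: `G` is the family of
directions of `C`, in the sense of affine spaces. -/
def IsDirection (C G : Set (G2 × G2)) : Prop :=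
  ∀ f : G2, ∃ H : AddSubgroup G2, {g : G2 | (f, g) ∈ G} = (H : Set G2) ∧
    ∃ g₀ : G2, {g : G2 | (f, g) ∈ C} = (fun h => g₀ + h) '' (H : Set G2)

namespace IsDirection

theorem zeroSection_subset (hG : IsDirection C G) : zeroSection ⊆ G := by
  rintro ⟨f, _⟩ rfl
  obtain ⟨H, hH, -⟩ := hG f
  exact hH.superset H.zero_mem

theorem mem_iff_sub_mem (hG : IsDirection C G) {f g h : G2} (hh : (f, h) ∈ C) :
    (f, g) ∈ C ↔ (f, g - h) ∈ G := by
  obtain ⟨H, hH, g₀, hC⟩ := hG f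
  have mem_G (k : G2) : (f, k) ∈ G ↔ k ∈ H := Set.ext_iff.1 hH k
  have mem_C (k : G2) : (f, k) ∈ C ↔ -g₀ + k ∈ H := by
    rw [Set.image_add_left] at hC
    exact Set.ext_iff.1 hC k
  have split : g - h = -g₀ + g - (-g₀ + h) := by abel
  rw [mem_C, mem_G, split, sub_eq_add_neg, H.add_mem_cancel_right (H.neg_mem ((mem_C h).1 hh))]

theorem rnkGE_of_subset_zeroSection (hG : IsDirection C G) (hA : A ⊆ zeroSection) :
    rnkGE G α A :=
  rnkGE_of_subset_coherent_section hG.zeroSection_subset coherent_zeroSection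
    (fun _ => ⟨0, rfl⟩) hA

end IsDirection

end Direction

section FiberTranslate

/-- The tuple `b` arises from `a` by the translations `(f, g) ↦ (f, g - h)` of the fibers over the
first coordinates of `a`, with every `(f, h)` taken from `A`. For coherent `A ⊆ C` such pairs are
the winning positions of the back-and-forth game, for as many rounds as the rank of `A` allows. -/
def IsFiberTranslate (A : Set (G2 × G2)) {n : ℕ} (a b : Fin n → G2 × G2) : Prop :=
  ∀ i, ∃ h, ((a i).1, h) ∈ A ∧ b i = ((a i).1, (a i).2 - h)

namespace IsFiberTranslate

theorem snoc (hab : IsFiberTranslate A a b) (f g h : G2) :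
    IsFiberTranslate (insert (f, h) A) (Fin.snoc a (f, g) : Fin (n + 1) → G2 × G2)
      (Fin.snoc b (f, g - h) : Fin (n + 1) → G2 × G2) := by
  refine Fin.lastCases ⟨h, by simp⟩ fun i => ?_
  obtain ⟨h', hA, hb⟩ := hab i
  exact ⟨h', by simp [hA], by simp [hb]⟩

theorem mQFEquiv (hG : IsDirection C G) (hA : Coherent A) (hAC : A ⊆ C)
    (hab : IsFiberTranslate A a b) : MQFEquiv C G a b := by
  choose h hh hb using hab
  have shift_eq (i j m) (hij : ∀ k ≤ m, (a i).1 k = (a j).1 k) : h i m = h j m :=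
    coherent_iff.1 hA _ (hh i) _ (hh j) m hij
  refine mQFEquiv_iff.2 ⟨fun i => ?_, fun i j m => ?_, fun i j m hij => ?_⟩
  · rw [hb]
    exact hG.mem_iff_sub_mem (hAC (hh i))
  · rw [hb, hb]
  · simp only [hb, Pi.sub_apply, shift_eq i j m hij, sub_left_inj]

end IsFiberTranslate

theorem IsDirection.mBFEquiv_of_isFiberTranslate (hG : IsDirection C G) (hA : Coherent A)
    (hAC : A ⊆ C) (hrnk : rnkGE C α A) (hab : IsFiberTranslate A a b) : MBFEquiv C G α a b := by
  refine bfEquiv_of_system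
    (fun α _ a b => ∃ A ⊆ C, Coherent A ∧ rnkGE C α A ∧ IsFiberTranslate A a b)
    ?_ ?_ ?_ ⟨A, hAC, hA, hrnk, hab⟩
  · rintro _ _ _ _ ⟨A, hAC, hA, -, hab⟩
    exact hab.mQFEquiv hG hA hAC
  · rintro _ _ _ _ _ ⟨A, -, -, hrnk, hab⟩ hβ ⟨f, g⟩
    obtain ⟨h, hC', hA', hrnk'⟩ := rnkGE_iff.1 hrnk _ hβ f
    exact ⟨(f, g - h), _, hC', hA', hrnk', hab.snoc f g h⟩
  · rintro _ _ _ _ _ ⟨A, -, -, hrnk, hab⟩ hβ ⟨f, g⟩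
    obtain ⟨h, hC', hA', hrnk'⟩ := rnkGE_iff.1 hrnk _ hβ f
    exact ⟨(f, g + h), _, hC', hA', hrnk', by simpa using hab.snoc f (g + h) h⟩

end FiberTranslate

theorem IsDirection.rnkGE_empty_of_mBFEquiv_succ (hG : IsDirection C G)
    (h : MBFEquiv C G (Order.succ α) (fun i : Fin 0 => i.elim0) (fun i : Fin 0 => i.elim0)) :
    rnkGE C α ∅ := by
  obtain ⟨x, hx⟩ := ((bfEquiv_iff.1 h).2 α (Order.lt_succ α)).2 (0, 0)
  refine rnkGE_anti (Set.empty_subset _) (rnkGE_range_of_mBFEquiv hx ?_)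
  refine hG.rnkGE_of_subset_zeroSection ?_
  simp [Fin.range_snoc, zeroSection]

end G2sys

/-- Let `C ∈ 𝐂` and let `G` be given by letting `G[f]` be the subgroup of which `C[f]` is a
coset.  If `rnk^C(∅) ≥ α` then `(𝔐, C) ≡_α (𝔐, G)`; and if `rnk^C(∅) < ∞` then
`(𝔐, C) ≢_∞ (𝔐, G)`. -/
theorem bfEquiv_of_rank (C G : Set (G2 × G2)) (hC : InC C)
    (hG : ∀ f : G2, ∃ H : AddSubgroup G2, {g : G2 | (f, g) ∈ G} = (H : Set G2) ∧
      ∃ g₀ : G2, {g : G2 | (f, g) ∈ C} = (fun h => g₀ + h) '' (H : Set G2))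
    (α : Ordinal.{0}) :
    (rnkGE C α ∅ →
      @BFEquiv L316 (G2 × G2) (G2 × G2) (MStruct C) (MStruct G) α 0
        (fun i => i.elim0) (fun i => i.elim0)) ∧
    ((¬ ∀ β : Ordinal.{0}, rnkGE C β ∅) →
      ¬ ∀ β : Ordinal.{0}, @BFEquiv L316 (G2 × G2) (G2 × G2) (MStruct C) (MStruct G) β 0
        (fun i => i.elim0) (fun i => i.elim0)) := by
  have hdir : IsDirection C G := hG
  constructor
  · intro hrnk
    exact hdir.mBFEquiv_of_isFiberTranslate (A := ∅) (by simp [Coherent]) (Set.empty_subset C) hrnk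
      (fun i => i.elim0)
  · intro hrnk hequiv
    exact hrnk fun β => hdir.rnkGE_empty_of_mBFEquiv_succ (hequiv (Order.succ β))
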